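/- arXiv:1304.4784 — 2 statements merged into one kernel-verified Lean document; each statement's English description precedes it below -/
import Mathlib

section
/- Let m ≥ 3, let X be a finite connected 2-connected graph with oriented edges such that the number N of maximal spanning trees of X not containing a given edge is independent of the edge, and let X̃ be its ℤ_m-homology cover. Then for all x, y ∈ X̃, d_Q(x,y) = (1/N)·Σ_T d_T(C^T_x, C^T_y), where the sum ranges over all maximal spanning trees T of X; consequently d_Q is symmetric and satisfies the triangle inequality, i.e. d_Q is a pseudometric on X̃. -/
open Filter
open scoped ENNReal NNReal

/-- `F` is a coarse embedding of `(X, dX)` into `(Y, dY)`: there are non-decreasing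
functions `ρ₋, ρ₊` tending to infinity which control the distortion of distances. -/
def CoarseEmbeddingWith {X Y : Type*} (dX : X → X → ℝ) (dY : Y → Y → ℝ) (F : X → Y) : Prop :=
  ∃ ρminus ρplus : ℝ → ℝ, Monotone ρminus ∧ Monotone ρplus ∧
    Tendsto ρminus atTop atTop ∧ Tendsto ρplus atTop atTop ∧
    ∀ x x' : X, ρminus (dX x x') ≤ dY (F x) (F x') ∧ dY (F x) (F x') ≤ ρplus (dX x x')

def IsPseudoMetricOn {X : Type*} (d : X → X → ℝ) : Prop :=
  (∀ x, d x x = 0) ∧ (∀ x y, d x y = d y x) ∧ ∀ x y z, d x z ≤ d x y + d y z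

def IsMetricOn {X : Type*} (d : X → X → ℝ) : Prop :=
  (∀ x y, d x y = 0 ↔ x = y) ∧ (∀ x y, d x y = d y x) ∧ ∀ x y z, d x z ≤ d x y + d y z

/-- The diameter of a space with distance function `dY`. -/
noncomputable def spaceDiam {Y : Type*} (dY : Y → Y → ℝ) : ℝ :=
  sSup (Set.range fun p : Y × Y => dY p.1 p.2)

/-- `D` is a coarse disjoint union of the spaces `(Y i, dY i)`: it restricts to `dY i` on each
component `Y i`, and the distance between two distinct components exceeds the maximum of
their diameters. -/
def IsCoarseDisjointUnionOf {ι : Type*} {Y : ι → Type*} (dY : ∀ i, Y i → Y i → ℝ)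
    (D : (Σ i, Y i) → (Σ i, Y i) → ℝ) : Prop :=
  (∀ (i : ι) (x y : Y i), D ⟨i, x⟩ ⟨i, y⟩ = dY i x y) ∧
  ∀ i j, i ≠ j → ∀ (x : Y i) (y : Y j),
    max (spaceDiam (dY i)) (spaceDiam (dY j)) < D ⟨i, x⟩ ⟨j, y⟩

namespace MultiGraph

variable {V E : Type*}

/-- The initial vertex of a step traversing the edge `s.1` forwards (`s.2 = true`) or
backwards (`s.2 = false`). -/
def stepSrc (src tgt : E → V) (s : E × Bool) : V := if s.2 then src s.1 else tgt s.1

/-- The terminal vertex of a step. -/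
def stepTgt (src tgt : E → V) (s : E × Bool) : V := if s.2 then tgt s.1 else src s.1

/-- `p` is a walk from `a` to `b` in the multigraph with edge endpoint maps `src`, `tgt`. -/
def IsWalk (src tgt : E → V) : V → V → List (E × Bool) → Prop
  | a, b, [] => a = b
  | a, b, s :: p => stepSrc src tgt s = a ∧ IsWalk src tgt (stepTgt src tgt s) b p

/-- The multigraph is connected. -/
def Connected (src tgt : E → V) : Prop := ∀ a b : V, ∃ p, IsWalk src tgt a b p

/-- The graph distance between two vertices (with junk value if there is no walk). -/
noncomputable def gdist (src tgt : E → V) (a b : V) : ℕ :=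
  sInf {n | ∃ p, IsWalk src tgt a b p ∧ p.length = n}

/-- A cycle based at `a`: a nonempty closed walk repeating no edge and no vertex. -/
def IsCycle (src tgt : E → V) (a : V) (p : List (E × Bool)) : Prop :=
  IsWalk src tgt a a p ∧ p ≠ [] ∧ (p.map Prod.fst).Nodup ∧ (p.map (stepSrc src tgt)).Nodup

/-- The girth: the length of a shortest cycle (`⊤` if there are no cycles). -/
noncomputable def girth (src tgt : E → V) : ℕ∞ :=
  sInf {n : ℕ∞ | ∃ (a : V) (p : List (E × Bool)), IsCycle src tgt a p ∧ (p.length : ℕ∞) = n}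

/-- Removing any single edge leaves the graph connected. -/
def TwoConnected (src tgt : E → V) : Prop :=
  ∀ (e : E) (a b : V), ∃ p, IsWalk src tgt a b p ∧ ∀ s ∈ p, s.1 ≠ e

/-- `T` is the edge set of a maximal spanning tree: every pair of vertices is joined by a
walk through `T`, and every cycle of the graph uses an edge outside `T`. -/
def IsSpanningTree (src tgt : E → V) (T : Set E) : Prop :=
  (∀ a b : V, ∃ p, IsWalk src tgt a b p ∧ ∀ s ∈ p, s.1 ∈ T) ∧
  ∀ (a : V) (p : List (E × Bool)), IsCycle src tgt a p → ∃ s ∈ p, s.1 ∉ T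

/-- The number `N_e` of maximal spanning trees avoiding the edge `e`. -/
noncomputable def numTreesAvoiding (src tgt : E → V) (e : E) : ℕ :=
  Nat.card {T : Set E // IsSpanningTree src tgt T ∧ e ∉ T}

open Classical in
/-- A chosen geodesic from `a` to `b` (junk value `[]` if there is no walk). -/
noncomputable def geod (src tgt : E → V) (a b : V) : List (E × Bool) :=
  if h : ∃ p, IsWalk src tgt a b p ∧ p.length = gdist src tgt a b then h.choose else []

open Classical in
/-- The number of times the walk `p` traverses the edge `e` in the positive direction. -/
noncomputable def countF (e : E) (p : List (E × Bool)) : ℕ :=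
  (p.filter fun s => s.1 = e ∧ s.2 = true).length

open Classical in
/-- The number of times the walk `p` traverses the edge `e` in the negative direction. -/
noncomputable def countB (e : E) (p : List (E × Bool)) : ℕ :=
  (p.filter fun s => s.1 = e ∧ s.2 = false).length

/-- Two walks are `m`-congruent if for every edge the signed numbers of traversals agree
modulo `m`. -/
def MCongruent (m : ℕ) (p₁ p₂ : List (E × Bool)) : Prop :=
  ∀ e : E, ((countF e p₁ : ℤ) - (countB e p₁ : ℤ)) ≡
    ((countF e p₂ : ℤ) - (countB e p₂ : ℤ)) [ZMOD (m : ℤ)]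

/-- A walk has no backtrack if no step is immediately followed by the same edge reversed. -/
def NoBacktrack (p : List (E × Bool)) : Prop :=
  List.Chain' (fun s s' => ¬(s'.1 = s.1 ∧ s'.2 = !s.2)) p

section Cover

open Classical in
/-- The image in `(ℤ/m)^{E ∖ T₀}` of the generator of `π₁` corresponding to the edge `e`
(trivial if `e` lies in the maximal spanning tree `T₀`). -/
noncomputable def coverRho (m : ℕ) (T₀ : Set E) (e : E) : {e' : E // e' ∉ T₀} → ZMod m :=
  fun f => if f.1 = e then 1 else 0

/-- Source map of the `ℤ/m`-homology cover built from the maximal spanning tree `T₀`: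
the lift `(e, k)` of the edge `e` starts at `(src e, k)`. -/
def coverSrc (m : ℕ) (src : E → V) (T₀ : Set E) :
    E × ({e' : E // e' ∉ T₀} → ZMod m) → V × ({e' : E // e' ∉ T₀} → ZMod m) :=
  fun ek => (src ek.1, ek.2)

/-- Target map of the `ℤ/m`-homology cover: the lift `(e, k)` of the edge `e` ends at
`(tgt e, k + ρ(e))`. -/
noncomputable def coverTgt (m : ℕ) (tgt : E → V) (T₀ : Set E) :
    E × ({e' : E // e' ∉ T₀} → ZMod m) → V × ({e' : E // e' ∉ T₀} → ZMod m) :=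
  fun ek => (tgt ek.1, ek.2 + coverRho m T₀ ek.1)

open Classical in
/-- The number of positively oriented lifts of the edge `e` traversed by a walk in the cover. -/
noncomputable def countLiftF (m : ℕ) (T₀ : Set E) (e : E)
    (p : List ((E × ({e' : E // e' ∉ T₀} → ZMod m)) × Bool)) : ℕ :=
  (p.filter fun s => s.1.1 = e ∧ s.2 = true).length

open Classical in
/-- The number of negatively oriented lifts of the edge `e` traversed by a walk in the cover. -/
noncomputable def countLiftB (m : ℕ) (T₀ : Set E) (e : E)
    (p : List ((E × ({e' : E // e' ∉ T₀} → ZMod m)) × Bool)) : ℕ :=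
  (p.filter fun s => s.1.1 = e ∧ s.2 = false).length

/-- `φ(e, x, y)`: the smallest non-negative residue modulo `m` of the absolute difference
between the numbers of positively and negatively oriented lifts of `e` traversed by the
chosen geodesic from `x` to `y` in the `ℤ/m`-homology cover. -/
noncomputable def phi (m : ℕ) (src tgt : E → V) (T₀ : Set E) (e : E)
    (x y : V × ({e' : E // e' ∉ T₀} → ZMod m)) : ℕ :=
  (((countLiftF m T₀ e (geod (coverSrc m src T₀) (coverTgt m tgt T₀) x y) : ℤ) -
      (countLiftB m T₀ e (geod (coverSrc m src T₀) (coverTgt m tgt T₀) x y) : ℤ)).natAbs) % m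

/-- The pseudometric `d_Q` on the `ℤ/m`-homology cover:
`d_Q(x,y) = Σ_{e ∈ E} Σ_{T : e ∉ T} (1/N_e) · min{φ(e,x,y), m − φ(e,x,y)}`,
the inner sum ranging over maximal spanning trees not containing `e`. -/
noncomputable def dQ (m : ℕ) (src tgt : E → V) (T₀ : Set E)
    (x y : V × ({e' : E // e' ∉ T₀} → ZMod m)) : ℝ :=
  ∑ᶠ (e : E), ∑ᶠ (T : Set E) (_ : IsSpanningTree src tgt T ∧ e ∉ T),
    (1 / (numTreesAvoiding src tgt e : ℝ)) *
      min (phi m src tgt T₀ e x y : ℝ) ((m : ℝ) - (phi m src tgt T₀ e x y : ℝ))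

open Classical in
/-- The distance `d_T(C^T_x, C^T_y)` between the clouds of `x` and `y` in the Cayley graph
of `(ℤ/m)^{E ∖ T}` obtained by collapsing the clouds associated to the maximal spanning
tree `T`: the least number of lifts of edges outside `T` traversed by a walk from `x` to `y`
in the cover. -/
noncomputable def cloudDist (m : ℕ) (src tgt : E → V) (T₀ : Set E) (T : Set E)
    (x y : V × ({e' : E // e' ∉ T₀} → ZMod m)) : ℕ :=
  sInf {n | ∃ p, IsWalk (coverSrc m src T₀) (coverTgt m tgt T₀) x y p ∧
    (p.filter fun s => s.1.1 ∉ T).length = n}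

open Classical in
/-- The cloud `C^T_x ∈ (ℤ/m)^{E ∖ T}` containing `x`, computed from a chosen geodesic from a
fixed basepoint of the cover to `x` by counting signed traversals of lifts of edges outside
`T`. -/
noncomputable def cloud (m : ℕ) (src tgt : E → V) (T₀ : Set E) (T : Set E)
    (x : V × ({e' : E // e' ∉ T₀} → ZMod m)) : {e : E // e ∉ T} → ZMod m :=
  if h : Nonempty (V × ({e' : E // e' ∉ T₀} → ZMod m)) then
    fun f =>
      (((countLiftF m T₀ f.1 (geod (coverSrc m src T₀) (coverTgt m tgt T₀) h.some x) : ℤ) -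
        (countLiftB m T₀ f.1 (geod (coverSrc m src T₀) (coverTgt m tgt T₀) h.some x) : ℤ)
          : ℤ) : ZMod m)
  else fun _ => 0

end Cover

/-- `(pV, pE)` is a covering of multigraphs: it commutes with the endpoint maps, and steps
lift uniquely at every vertex. -/
def IsGraphCovering {V' E' : Type*} (src tgt : E → V) (src' tgt' : E' → V')
    (pV : V' → V) (pE : E' → E) : Prop :=
  (∀ e : E', pV (src' e) = src (pE e)) ∧ (∀ e : E', pV (tgt' e) = tgt (pE e)) ∧
  ∀ (v' : V') (s : E × Bool), stepSrc src tgt s = pV v' →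
    ∃! s' : E' × Bool, stepSrc src' tgt' s' = v' ∧ pE s'.1 = s.1 ∧ s'.2 = s.2

end MultiGraph

/-- The word length of `a` with respect to the symmetrization of the generating set `S`
in an additive group. -/
noncomputable def addWordLength {A : Type*} [AddGroup A] (S : Set A) (a : A) : ℕ :=
  sInf {n | ∃ l : List A, (∀ x ∈ l, x ∈ S ∨ -x ∈ S) ∧ l.sum = a ∧ l.length = n}

open Classical in
/-- The word metric on `(ℤ/m)^r` with respect to the standard generating set
(one canonical generator for each factor). -/
noncomputable def zmodWordDist (m r : ℕ) (a b : Fin r → ZMod m) : ℕ :=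
  addWordLength {g : Fin r → ZMod m | ∃ i : Fin r, g = Pi.single i 1} (b - a)

namespace MultiGraph

section Helpers

variable {V E : Type*}

lemma IsWalk.append {src tgt : E → V} {a b c : V} {p q : List (E × Bool)}
    (hp : IsWalk src tgt a b p) (hq : IsWalk src tgt b c q) :
    IsWalk src tgt a c (p ++ q) := by
  induction p generalizing a with
  | nil => cases hp; simpa using hq
  | cons s p ih => exact ⟨hp.1, ih hp.2⟩

lemma IsWalk.split {src tgt : E → V} {a c : V} {p q : List (E × Bool)}
    (h : IsWalk src tgt a c (p ++ q)) :
    ∃ b, IsWalk src tgt a b p ∧ IsWalk src tgt b c q := by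
  induction p generalizing a with
  | nil => exact ⟨a, rfl, h⟩
  | cons s p ih =>
    obtain ⟨b, h1, h2⟩ := ih h.2
    exact ⟨b, ⟨h.1, h1⟩, h2⟩

/-- The vertices of a walk: sources of steps, then the end vertex. -/
def walkVerts (src tgt : E → V) (b : V) (p : List (E × Bool)) : List V :=
  p.map (stepSrc src tgt) ++ [b]

lemma IsWalk.start_mem {src tgt : E → V} {a b : V} {p : List (E × Bool)}
    (h : IsWalk src tgt a b p) : a ∈ walkVerts src tgt b p := by
  cases p with
  | nil => cases h; simp [walkVerts]
  | cons s p => have := h.1; simp [walkVerts, this]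

lemma IsWalk.ends_mem {src tgt : E → V} {a b : V} {p : List (E × Bool)}
    (h : IsWalk src tgt a b p) {s : E × Bool} (hs : s ∈ p) :
    stepSrc src tgt s ∈ walkVerts src tgt b p ∧ stepTgt src tgt s ∈ walkVerts src tgt b p := by
  induction p generalizing a with
  | nil => simp at hs
  | cons t p ih =>
    rcases List.mem_cons.1 hs with rfl | hs
    · exact ⟨by simp [walkVerts], List.mem_cons_of_mem _ h.2.start_mem⟩
    · exact ⟨List.mem_cons_of_mem _ (ih h.2 hs).1, List.mem_cons_of_mem _ (ih h.2 hs).2⟩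

lemma IsWalk.edges_nodup {src tgt : E → V} {a b : V} {p : List (E × Bool)}
    (h : IsWalk src tgt a b p) (hn : (walkVerts src tgt b p).Nodup) :
    (p.map Prod.fst).Nodup := by
  induction p generalizing a with
  | nil => simp
  | cons t p ih =>
    have hn' : stepSrc src tgt t ∉ walkVerts src tgt b p ∧ (walkVerts src tgt b p).Nodup := by
      simpa [walkVerts] using hn
    rw [List.map_cons, List.nodup_cons]
    refine ⟨?_, ih h.2 hn'.2⟩
    intro hm
    obtain ⟨s, hs, hst⟩ := List.mem_map.1 hm
    have h2 := h.2.ends_mem hs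
    apply hn'.1
    obtain ⟨e, b1⟩ := s
    obtain ⟨e', b2⟩ := t
    simp only at hst
    subst hst
    cases b1 <;> cases b2 <;> simp [stepSrc, stepTgt] at h2 ⊢ <;> tauto

/-- If there is a walk satisfying a stepwise predicate, there is one with distinct vertices. -/
lemma exists_path {src tgt : E → V} {P : E × Bool → Prop} {a b : V} {p : List (E × Bool)}
    (h : IsWalk src tgt a b p) (hP : ∀ s ∈ p, P s) :
    ∃ q, IsWalk src tgt a b q ∧ (∀ s ∈ q, P s) ∧ (walkVerts src tgt b q).Nodup := by
  induction p generalizing a with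
  | nil => exact ⟨[], h, by simp, by simp [walkVerts]⟩
  | cons s p ih =>
    obtain ⟨q, hq, hqP, hqn⟩ := ih h.2 (fun t ht => hP t (List.mem_cons_of_mem _ ht))
    by_cases ha : a ∈ walkVerts src tgt b q
    · -- cut the walk at `a`
      clear ih h hP
      generalize stepTgt src tgt s = c at hq
      induction q generalizing c with
      | nil =>
        have : a = b := by simpa [walkVerts] using ha
        exact ⟨[], this, by simp, by simp [walkVerts]⟩
      | cons t q ih2 =>
        by_cases hat : a = stepSrc src tgt t
        · exact ⟨t :: q, ⟨hat.symm, hq.2⟩, hqP, hqn⟩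
        · have hn' : stepSrc src tgt t ∉ walkVerts src tgt b q ∧
              (walkVerts src tgt b q).Nodup := by
            simpa [walkVerts] using hqn
          refine ih2 (fun u hu => hqP u (List.mem_cons_of_mem _ hu)) hn'.2 ?_ _ hq.2
          simpa [walkVerts, hat] using ha
    · refine ⟨s :: q, ⟨h.1, hq⟩, ?_, ?_⟩
      · intro t ht
        rcases List.mem_cons.1 ht with rfl | ht
        · exact hP _ (by simp)
        · exact hqP t ht
      · have h1 := h.1
        have : (stepSrc src tgt s :: walkVerts src tgt b q).Nodup :=
          List.nodup_cons.2 ⟨by rw [h1]; exact ha, hqn⟩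
        simpa [walkVerts] using this

lemma IsSpanningTree.no_walk {src tgt : E → V} {T : Set E} (hT : IsSpanningTree src tgt T)
    {e : E} (he : e ∈ T) {p : List (E × Bool)} (hp : IsWalk src tgt (tgt e) (src e) p)
    (hpT : ∀ s ∈ p, s.1 ∈ T ∧ s.1 ≠ e) : False := by
  obtain ⟨q, hq, hqP, hqn⟩ := exists_path (P := fun s => s.1 ∈ T ∧ s.1 ≠ e) hp hpT
  have hc : IsCycle src tgt (src e) ((e, true) :: q) := by
    refine ⟨⟨by simp [stepSrc], by simpa [stepTgt] using hq⟩, by simp, ?_, ?_⟩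
    · rw [List.map_cons, List.nodup_cons]
      refine ⟨?_, hq.edges_nodup hqn⟩
      intro hm
      obtain ⟨s, hs, hst⟩ := List.mem_map.1 hm
      exact (hqP s hs).2 hst
    · rw [walkVerts, List.nodup_append] at hqn
      rw [List.map_cons, List.nodup_cons]
      refine ⟨?_, hqn.1⟩
      intro hm
      exact hqn.2.2 _ hm (src e) (by simp) (by simp [stepSrc])
  obtain ⟨s, hs, hsT⟩ := hT.2 _ _ hc
  rcases List.mem_cons.1 hs with rfl | hs
  · exact hsT he
  · exact hsT (hqP s hs).1

/-- Signed contribution of a step to the edge `e`. -/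
noncomputable def stepSign (s : E × Bool) (e : E) : ℤ :=
  open Classical in if s.1 = e then (if s.2 then 1 else -1) else 0

/-- Signed number of traversals of `e` by `p`. -/
noncomputable def sc (e : E) : List (E × Bool) → ℤ
  | [] => 0
  | s :: p => stepSign s e + sc e p

lemma sc_append (e : E) (p q : List (E × Bool)) : sc e (p ++ q) = sc e p + sc e q := by
  induction p with
  | nil => simp [sc]
  | cons s p ih => simp [sc, ih, add_assoc]

/-- Reversing a walk. -/
def rev : List (E × Bool) → List (E × Bool)
  | [] => []
  | s :: p => rev p ++ [(s.1, !s.2)]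

lemma sc_rev (e : E) (p : List (E × Bool)) : sc e (rev p) = - sc e p := by
  induction p with
  | nil => simp [sc, rev]
  | cons s p ih =>
    obtain ⟨f, b⟩ := s
    rw [rev, sc_append, ih]
    simp only [sc, stepSign]
    cases b <;> split_ifs <;> simp_all

lemma IsWalk.rev {src tgt : E → V} {a b : V} {p : List (E × Bool)}
    (h : IsWalk src tgt a b p) : IsWalk src tgt b a (rev p) := by
  induction p generalizing a with
  | nil => exact Eq.symm h
  | cons s p ih =>
    refine (ih h.2).append ?_
    obtain ⟨f, b⟩ := s
    have := h.1
    cases b <;> simpa [IsWalk, stepSrc, stepTgt] using this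

lemma potential [Fintype E] {src tgt : E → V} {m : ℕ} (f : V → ZMod m) {a b : V}
    {p : List (E × Bool)} (h : IsWalk src tgt a b p) :
    f b - f a = ∑ e, (sc e p : ZMod m) * (f (tgt e) - f (src e)) := by
  classical
  induction p generalizing a with
  | nil => cases h; simp [sc]
  | cons s p ih =>
    have h1 := ih h.2
    have h0 := h.1
    have : ∑ e, (stepSign s e : ZMod m) * (f (tgt e) - f (src e)) =
        f (stepTgt src tgt s) - f (stepSrc src tgt s) := by
      rw [Finset.sum_eq_single s.1]
      · obtain ⟨g, c⟩ := s
        cases c <;> simp [stepSign, stepSrc, stepTgt]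
      · intro e _ he
        simp [stepSign, he.symm]
      · simp
    simp only [sc, Int.cast_add, add_mul, Finset.sum_add_distrib]
    rw [this, ← h1, h0]
    ring

/-- Walks with the same endpoints which agree mod `m` off a spanning tree agree everywhere. -/
lemma sc_determined [Fintype E] {src tgt : E → V} {m : ℕ} {T : Set E}
    (hT : IsSpanningTree src tgt T) {a b : V} {p q : List (E × Bool)}
    (hp : IsWalk src tgt a b p) (hq : IsWalk src tgt a b q)
    (h : ∀ e, e ∉ T → (sc e p : ZMod m) = sc e q) (e : E) : (sc e p : ZMod m) = sc e q := by
  classical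
  by_cases he : e ∈ T
  swap
  · exact h e he
  let f : V → ZMod m := fun v =>
    if ∃ r, IsWalk src tgt (tgt e) v r ∧ ∀ s ∈ r, s.1 ∈ T ∧ s.1 ≠ e then 1 else 0
  have ht : f (tgt e) = 1 := if_pos ⟨[], rfl, by simp⟩
  have hs : f (src e) = 0 := by
    apply if_neg
    rintro ⟨r, hr, hrT⟩
    exact hT.no_walk he hr hrT
  have hf : ∀ g, g ∈ T → g ≠ e → f (tgt g) = f (src g) := by
    intro g hg hge
    have : (∃ r, IsWalk src tgt (tgt e) (tgt g) r ∧ ∀ s ∈ r, s.1 ∈ T ∧ s.1 ≠ e) ↔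
        (∃ r, IsWalk src tgt (tgt e) (src g) r ∧ ∀ s ∈ r, s.1 ∈ T ∧ s.1 ≠ e) := by
      constructor
      · rintro ⟨r, hr, hrT⟩
        refine ⟨r ++ [(g, false)], hr.append (by simp [IsWalk, stepSrc, stepTgt]), ?_⟩
        intro s hs
        rcases List.mem_append.1 hs with hs | hs
        · exact hrT s hs
        · simp at hs; subst hs; exact ⟨hg, hge⟩
      · rintro ⟨r, hr, hrT⟩
        refine ⟨r ++ [(g, true)], hr.append (by simp [IsWalk, stepSrc, stepTgt]), ?_⟩
        intro s hs
        rcases List.mem_append.1 hs with hs | hs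
        · exact hrT s hs
        · simp at hs; subst hs; exact ⟨hg, hge⟩
    simp only [f, this]
  have h1 := (potential f hp).symm.trans (potential f hq)
  rw [← sub_eq_zero, ← Finset.sum_sub_distrib, Finset.sum_eq_single e, ht, hs] at h1
  · simpa [sub_eq_zero] using h1
  · intro g _ hge
    by_cases hg : g ∈ T
    · rw [hf g hg hge]; simp
    · rw [h g hg]; simp
  · simp

open Classical in
/-- Number of steps of `p` off `T`. -/
noncomputable def offLen (T : Set E) (p : List (E × Bool)) : ℕ :=
  (p.filter fun s => s.1 ∉ T).length

lemma offLen_append (T : Set E) (p q : List (E × Bool)) :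
    offLen T (p ++ q) = offLen T p + offLen T q := by
  simp [offLen]

lemma offLen_eq_zero {T : Set E} {p : List (E × Bool)} (h : ∀ s ∈ p, s.1 ∈ T) :
    offLen T p = 0 := by
  simp only [offLen, List.length_eq_zero_iff, List.filter_eq_nil_iff]
  intro s hs
  simp [h s hs]

lemma sc_eq_zero {e : E} {p : List (E × Bool)} (h : ∀ s ∈ p, s.1 ≠ e) : sc e p = 0 := by
  induction p with
  | nil => rfl
  | cons s p ih =>
    rw [sc, ih (fun t ht => h t (List.mem_cons_of_mem _ ht))]
    simp [stepSign, h s (by simp)]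

open Classical in
lemma le_offLen [Fintype E] (T : Set E) (p : List (E × Bool)) :
    ∑ e, (if e ∉ T then (sc e p).natAbs else 0) ≤ offLen T p := by
  induction p with
  | nil => simp [sc, offLen]
  | cons s p ih =>
    have h1 : ∑ e, (if e ∉ T then (stepSign s e).natAbs else 0) = offLen T [s] := by
      rw [Finset.sum_eq_single s.1]
      · obtain ⟨g, c⟩ := s
        by_cases hg : g ∈ T <;> cases c <;> simp [stepSign, offLen, hg]
      · intro e _ he
        simp [stepSign, he.symm]
      · simp
    have h2 : offLen T (s :: p) = offLen T [s] + offLen T p := offLen_append T [s] p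
    rw [h2, ← h1]
    refine le_trans ?_ (Nat.add_le_add_left ih _)
    rw [← Finset.sum_add_distrib]
    apply Finset.sum_le_sum
    intro e _
    split_ifs
    · simp
    · exact Int.natAbs_add_le _ _

/-- Realizability of prescribed signed counts off `T` with prescribed number of steps off `T`. -/
def Realizable (src tgt : E → V) (T : Set E) (c : E → ℤ) (n : ℕ) : Prop :=
  ∀ a b : V, ∃ p, IsWalk src tgt a b p ∧ (∀ e, e ∉ T → sc e p = c e) ∧ offLen T p = n

lemma Realizable.zero {src tgt : E → V} {T : Set E} (hT : IsSpanningTree src tgt T) :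
    Realizable src tgt T 0 0 := by
  intro a b
  obtain ⟨p, hp, hpT⟩ := hT.1 a b
  exact ⟨p, hp, fun e he => sc_eq_zero (fun s hs h => he (h ▸ hpT s hs)), offLen_eq_zero hpT⟩

lemma Realizable.add {src tgt : E → V} {T : Set E} {c c' : E → ℤ} {n n' : ℕ}
    (h : Realizable src tgt T c n) (h' : Realizable src tgt T c' n') :
    Realizable src tgt T (c + c') (n + n') := by
  intro a b
  obtain ⟨p, hp, hpc, hpn⟩ := h a a
  obtain ⟨q, hq, hqc, hqn⟩ := h' a b
  exact ⟨p ++ q, hp.append hq, fun e he => by rw [sc_append, hpc e he, hqc e he]; rfl,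
    by rw [offLen_append, hpn, hqn]⟩

lemma Realizable.step {src tgt : E → V} {T : Set E} (hT : IsSpanningTree src tgt T)
    (s : E × Bool) (hs : s.1 ∉ T) : Realizable src tgt T (stepSign s) 1 := by
  intro a b
  obtain ⟨p, hp, hpc, hpn⟩ := Realizable.zero hT a (stepSrc src tgt s)
  obtain ⟨q, hq, hqc, hqn⟩ := Realizable.zero hT (stepTgt src tgt s) b
  refine ⟨p ++ ([s] ++ q), hp.append (IsWalk.append ⟨rfl, rfl⟩ hq), ?_, ?_⟩
  · intro e he
    rw [sc_append, sc_append, hpc e he, hqc e he]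
    simp [sc]
  · rw [offLen_append, offLen_append, hpn, hqn]
    simp [offLen, hs]

lemma Realizable.nsmul {src tgt : E → V} {T : Set E} (hT : IsSpanningTree src tgt T)
    (s : E × Bool) (hs : s.1 ∉ T) (n : ℕ) :
    Realizable src tgt T (n • stepSign s) n := by
  induction n with
  | zero => simpa using Realizable.zero hT
  | succ n ih => rw [succ_nsmul]; exact ih.add (Realizable.step hT s hs)

open Classical in
lemma Realizable.single {src tgt : E → V} {T : Set E} (hT : IsSpanningTree src tgt T)
    (e : E) (he : e ∉ T) (k : ℤ) :
    Realizable src tgt T (Pi.single e k) k.natAbs := by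
  rcases Int.natAbs_eq k with hk | hk
  · have := Realizable.nsmul hT (e, true) he k.natAbs
    convert this using 1
    ext f
    by_cases hf : f = e
    · subst hf; simpa [stepSign, -Int.natCast_natAbs] using hk
    · simp [stepSign, hf, Ne.symm hf]
  · have := Realizable.nsmul hT (e, false) he k.natAbs
    convert this using 1
    ext f
    by_cases hf : f = e
    · subst hf; simpa [stepSign, -Int.natCast_natAbs] using hk
    · simp [stepSign, hf, Ne.symm hf]

open Classical in
lemma realizable_all [Fintype E] {src tgt : E → V} {T : Set E}
    (hT : IsSpanningTree src tgt T) (c : E → ℤ) :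
    Realizable src tgt T c (∑ e, if e ∉ T then (c e).natAbs else 0) := by
  have key : ∀ S : Finset E, Realizable src tgt T
      (∑ e ∈ S, Pi.single e (if e ∉ T then c e else 0))
      (∑ e ∈ S, if e ∉ T then (c e).natAbs else 0) := by
    intro S
    induction S using Finset.induction_on with
    | empty => simpa using Realizable.zero hT
    | insert e S he ih =>
      rw [Finset.sum_insert he, Finset.sum_insert he]
      refine Realizable.add ?_ ih
      by_cases h : e ∈ T
      · simpa [h] using Realizable.zero hT
      · simpa [h] using Realizable.single hT e h (c e)
  intro a b
  obtain ⟨p, hp, hpc, hpn⟩ := key Finset.univ a b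
  refine ⟨p, hp, ?_, hpn⟩
  intro e he
  rw [hpc e he, Finset.univ_sum_single]
  simp [he]

section Cover

variable {m : ℕ} {T₀ : Set E}

/-- Projection of walks from the cover. -/
def proj (p : List ((E × ({e' : E // e' ∉ T₀} → ZMod m)) × Bool)) : List (E × Bool) :=
  p.map fun s => (s.1.1, s.2)

lemma count_eq_sc (e : E) (p : List ((E × ({e' : E // e' ∉ T₀} → ZMod m)) × Bool)) :
    (countLiftF m T₀ e p : ℤ) - countLiftB m T₀ e p = sc e (proj p) := by
  induction p with
  | nil => simp [countLiftF, countLiftB, proj, sc]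
  | cons s p ih =>
    have hp : proj (s :: p) = (s.1.1, s.2) :: proj p := rfl
    rw [hp, sc, ← ih]
    obtain ⟨⟨f, k⟩, b⟩ := s
    by_cases hf : f = e <;> cases b <;>
      simp [countLiftF, countLiftB, stepSign, hf] <;> ring

lemma cover_walk {src tgt : E → V} {x y : V × ({e' : E // e' ∉ T₀} → ZMod m)}
    {p : List ((E × ({e' : E // e' ∉ T₀} → ZMod m)) × Bool)}
    (h : IsWalk (coverSrc m src T₀) (coverTgt m tgt T₀) x y p) :
    IsWalk src tgt x.1 y.1 (proj p) ∧ ∀ f, y.2 f = x.2 f + (sc f.1 (proj p) : ZMod m) := by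
  induction p generalizing x with
  | nil => cases h; simp [proj, sc, IsWalk]
  | cons s p ih =>
    obtain ⟨h1, h2⟩ := ih h.2
    have h0 := h.1
    obtain ⟨⟨f, k⟩, b⟩ := s
    subst h0
    have hp : proj (((f, k), b) :: p) = (f, b) :: proj p := rfl
    rw [hp]
    refine ⟨⟨?_, ?_⟩, ?_⟩
    · cases b <;> simp [stepSrc, coverSrc, coverTgt]
    · convert h1 using 1
      cases b <;> simp [stepTgt, coverSrc, coverTgt]
    · intro g
      rw [h2 g, sc]
      by_cases hg : f = g.1 <;> cases b <;>
        simp [stepSrc, stepTgt, coverSrc, coverTgt, stepSign, coverRho, hg, eq_comm (a := g.1)] <;> ring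

lemma lift_walk {src tgt : E → V} {a b : V} {p : List (E × Bool)}
    (h : IsWalk src tgt a b p) (k : {e' : E // e' ∉ T₀} → ZMod m) :
    ∃ (l : {e' : E // e' ∉ T₀} → ZMod m) (q : _),
      IsWalk (coverSrc m src T₀) (coverTgt m tgt T₀) (a, k) (b, l) q ∧ proj q = p := by
  induction p generalizing a k with
  | nil => cases h; exact ⟨k, [], rfl, rfl⟩
  | cons s p ih =>
    obtain ⟨f, c⟩ := s
    have h0 := h.1
    cases c
    · obtain ⟨l, q, hq, hqp⟩ := ih h.2 (k - coverRho m T₀ f)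
      refine ⟨l, ((f, k - coverRho m T₀ f), false) :: q, ⟨?_, ?_⟩, ?_⟩
      · simpa [stepSrc, coverTgt] using h0
      · simpa [stepTgt, coverSrc] using hq
      · rw [← hqp]; rfl
    · obtain ⟨l, q, hq, hqp⟩ := ih h.2 (k + coverRho m T₀ f)
      refine ⟨l, ((f, k), true) :: q, ⟨?_, ?_⟩, ?_⟩
      · simpa [stepSrc, coverSrc] using h0
      · simpa [stepTgt, coverTgt] using hq
      · rw [← hqp]; rfl

lemma lift_walk' {src tgt : E → V} {x y : V × ({e' : E // e' ∉ T₀} → ZMod m)}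
    {p : List (E × Bool)} (h : IsWalk src tgt x.1 y.1 p)
    (hp : ∀ f : {e' : E // e' ∉ T₀}, y.2 f = x.2 f + (sc f.1 p : ZMod m)) :
    ∃ q, IsWalk (coverSrc m src T₀) (coverTgt m tgt T₀) x y q ∧ proj q = p := by
  obtain ⟨l, q, hq, hqp⟩ := lift_walk (m := m) (T₀ := T₀) h x.2
  have h2 := (cover_walk hq).2
  have : (y.1, l) = y := by
    refine Prod.ext rfl ?_
    funext f
    rw [hp f, ← hqp]
    exact h2 f
  rw [this] at hq
  exact ⟨q, hq, hqp⟩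

lemma cover_connected [Fintype E] {src tgt : E → V} (hT₀ : IsSpanningTree src tgt T₀)
    (x y : V × ({e' : E // e' ∉ T₀} → ZMod m)) :
    ∃ q, IsWalk (coverSrc m src T₀) (coverTgt m tgt T₀) x y q := by
  classical
  obtain ⟨p, hp, hpc, -⟩ := realizable_all hT₀
    (fun e => if h : e ∉ T₀ then ((y.2 ⟨e, h⟩ - x.2 ⟨e, h⟩ : ZMod m).valMinAbs) else 0) x.1 y.1
  obtain ⟨q, hq, -⟩ := lift_walk' (m := m) (T₀ := T₀) hp (fun f => by
    rw [hpc f.1 f.2]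
    simp [f.2])
  exact ⟨q, hq⟩

lemma geod_walk {V E : Type*} {src tgt : E → V} {x y : V} (h : ∃ p, IsWalk src tgt x y p) :
    IsWalk src tgt x y (geod src tgt x y) := by
  have h' : ∃ p, IsWalk src tgt x y p ∧ p.length = gdist src tgt x y := by
    obtain ⟨p, hp⟩ := h
    exact Nat.sInf_mem (s := {n | ∃ p, IsWalk src tgt x y p ∧ p.length = n}) ⟨_, p, hp, rfl⟩
  rw [geod, dif_pos h']
  exact h'.choose_spec.1

/-- The class mod `m` of the signed count of lifts of `e` on the chosen geodesic. -/
noncomputable def cls (m : ℕ) (src tgt : E → V) (T₀ : Set E) (e : E)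
    (x y : V × ({e' : E // e' ∉ T₀} → ZMod m)) : ZMod m :=
  (sc e (proj (geod (coverSrc m src T₀) (coverTgt m tgt T₀) x y)) : ZMod m)

lemma cls_eq [Fintype E] {src tgt : E → V} (hT₀ : IsSpanningTree src tgt T₀)
    {x y : V × ({e' : E // e' ∉ T₀} → ZMod m)}
    {p : List ((E × ({e' : E // e' ∉ T₀} → ZMod m)) × Bool)}
    (h : IsWalk (coverSrc m src T₀) (coverTgt m tgt T₀) x y p) (e : E) :
    (sc e (proj p) : ZMod m) = cls m src tgt T₀ e x y := by
  obtain ⟨h1, h2⟩ := cover_walk h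
  obtain ⟨h3, h4⟩ := cover_walk (geod_walk ⟨p, h⟩)
  refine sc_determined hT₀ h1 h3 ?_ e
  intro f hf
  have := (h2 ⟨f, hf⟩).symm.trans (h4 ⟨f, hf⟩)
  simpa using this

lemma natAbs_cast_le [NeZero m] (z : ℤ) : ((z : ZMod m).valMinAbs).natAbs ≤ z.natAbs := by
  apply ZMod.natAbs_min_of_le_div_two m
  · simp
  · exact ZMod.natAbs_valMinAbs_le _

lemma min_phi [NeZero m] (src tgt : E → V) (e : E)
    (x y : V × ({e' : E // e' ∉ T₀} → ZMod m)) :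
    min (phi m src tgt T₀ e x y : ℝ) ((m : ℝ) - (phi m src tgt T₀ e x y : ℝ)) =
      ((cls m src tgt T₀ e x y).valMinAbs.natAbs : ℝ) := by
  rw [phi, count_eq_sc, cls]
  generalize sc e _ = z
  have h1 : ((z : ZMod m).valMinAbs).natAbs = ((z.natAbs : ZMod m).valMinAbs).natAbs := by
    rw [ZMod.natAbs_valMinAbs_eq_natAbs_valMinAbs]
    rcases Int.natAbs_eq z with h | h
    · left; conv_lhs => rw [h]
      simp
    · right; conv_lhs => rw [h]
      simp
  rw [h1, ZMod.valMinAbs_natAbs_eq_min, ZMod.val_natCast, Nat.cast_min,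
    Nat.cast_sub (Nat.mod_lt _ (NeZero.pos m)).le]

open Classical in
lemma cloudDist_eq [NeZero m] [Fintype E] {src tgt : E → V} (hT₀ : IsSpanningTree src tgt T₀)
    {T : Set E} (hT : IsSpanningTree src tgt T) (x y : V × ({e' : E // e' ∉ T₀} → ZMod m)) :
    cloudDist m src tgt T₀ T x y =
      ∑ e, if e ∉ T then (cls m src tgt T₀ e x y).valMinAbs.natAbs else 0 := by
  have hlen : ∀ p : List ((E × ({e' : E // e' ∉ T₀} → ZMod m)) × Bool),
      (p.filter fun s => s.1.1 ∉ T).length = offLen T (proj p) := by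
    intro p
    simp only [offLen, proj, List.filter_map, List.length_map]
    rfl
  apply le_antisymm
  · apply Nat.sInf_le
    obtain ⟨p, hp, hpc, hpn⟩ := realizable_all hT
      (fun e => (cls m src tgt T₀ e x y).valMinAbs) x.1 y.1
    obtain ⟨h3, h4⟩ := cover_walk (geod_walk (cover_connected hT₀ x y))
    have hall := sc_determined (m := m) hT hp h3 (fun e he => by
      rw [hpc e he]; simp [cls])
    obtain ⟨q, hq, hqp⟩ := lift_walk' (m := m) (T₀ := T₀) hp (fun f => by
      rw [hall f.1]; exact h4 f)
    exact ⟨q, hq, by rw [hlen, hqp, hpn]⟩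
  · apply le_csInf
    · obtain ⟨q, hq⟩ := cover_connected hT₀ x y
      exact ⟨_, q, hq, rfl⟩
    · rintro n ⟨p, hp, rfl⟩
      rw [hlen]
      refine le_trans ?_ (le_offLen T (proj p))
      apply Finset.sum_le_sum
      intro e _
      split_ifs
      · exact le_rfl
      · rw [← cls_eq hT₀ hp e]
        exact natAbs_cast_le _

open Classical in
lemma dQ_eq [NeZero m] [Fintype E] (src tgt : E → V)
    (N : ℕ) (hN : ∀ e : E, numTreesAvoiding src tgt e = N)
    (x y : V × ({e' : E // e' ∉ T₀} → ZMod m)) :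
    dQ m src tgt T₀ x y = ∑ e, ∑ T : Set E, if IsSpanningTree src tgt T ∧ e ∉ T then
      (1 / (N : ℝ)) * ((cls m src tgt T₀ e x y).valMinAbs.natAbs : ℝ) else 0 := by
  simp only [dQ, hN, min_phi, finsum_eq_sum_of_fintype]
  refine Finset.sum_congr rfl fun e _ => Finset.sum_congr rfl fun T _ => ?_
  rw [finsum_eq_if]

end Cover

end Helpers

end MultiGraph

open MultiGraph in
/-- When the number `N` of maximal spanning trees avoiding an edge does not depend on the
edge, `d_Q(x,y) = (1/N) · Σ_T d_T(C^T_x, C^T_y)`, the sum ranging over all maximal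
spanning trees `T` of `X`; consequently `d_Q` is a pseudometric on the cover `X̃`. -/
theorem dQ_eq_average_cloud_dist_and_pseudometric (m : ℕ) (hm : 3 ≤ m)
    (V E : Type) [Fintype V] [Fintype E]
    (src tgt : E → V) (hconn : Connected src tgt) (h2conn : TwoConnected src tgt)
    (N : ℕ) (hN : ∀ e : E, numTreesAvoiding src tgt e = N)
    (T₀ : Set E) (hT₀ : IsSpanningTree src tgt T₀) :
    (∀ x y : V × ({e : E // e ∉ T₀} → ZMod m),
      dQ m src tgt T₀ x y =
        (1 / (N : ℝ)) * ∑ᶠ (T : Set E) (_ : IsSpanningTree src tgt T),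
          (cloudDist m src tgt T₀ T x y : ℝ)) ∧
    IsPseudoMetricOn (dQ m src tgt T₀) := by
  classical
  haveI : NeZero m := ⟨by omega⟩
  refine ⟨?_, ?_, ?_, ?_⟩
  · intro x y
    rw [dQ_eq src tgt N hN, Finset.sum_comm, finsum_eq_sum_of_fintype, Finset.mul_sum]
    refine Finset.sum_congr rfl fun T _ => ?_
    rw [finsum_eq_if]
    by_cases hT : IsSpanningTree src tgt T
    · rw [if_pos hT, cloudDist_eq hT₀ hT, Nat.cast_sum, Finset.mul_sum]
      refine Finset.sum_congr rfl fun e _ => ?_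
      by_cases he : e ∈ T <;> simp [hT, he]
    · simp [hT]
  · intro x
    rw [dQ_eq src tgt N hN]
    have h : ∀ e, cls m src tgt T₀ e x x = 0 := by
      intro e
      rw [← cls_eq hT₀ (p := []) rfl e]
      simp [proj, sc]
    simp [h]
  · intro x y
    rw [dQ_eq src tgt N hN, dQ_eq src tgt N hN]
    refine Finset.sum_congr rfl fun e _ => Finset.sum_congr rfl fun T _ => ?_
    obtain ⟨p, hp⟩ := cover_connected hT₀ x y
    have h : cls m src tgt T₀ e y x = - cls m src tgt T₀ e x y := by
      have hr : ∀ p : List ((E × ({e' : E // e' ∉ T₀} → ZMod m)) × Bool),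
          proj (rev p) = rev (proj p) := by
        intro p
        induction p with
        | nil => rfl
        | cons s p ih =>
          have : proj (s :: p) = (s.1.1, s.2) :: proj p := rfl
          rw [this, rev, rev, ← ih]
          simp [proj]
      rw [← cls_eq hT₀ hp e, ← cls_eq hT₀ hp.rev e, hr, sc_rev]
      simp
    rw [h, ZMod.natAbs_valMinAbs_neg]
  · intro x y z
    rw [dQ_eq src tgt N hN, dQ_eq src tgt N hN, dQ_eq src tgt N hN, ← Finset.sum_add_distrib]
    refine Finset.sum_le_sum fun e _ => ?_
    rw [← Finset.sum_add_distrib]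
    refine Finset.sum_le_sum fun T _ => ?_
    obtain ⟨p, hp⟩ := cover_connected hT₀ x y
    obtain ⟨q, hq⟩ := cover_connected hT₀ y z
    have h : cls m src tgt T₀ e x z = cls m src tgt T₀ e x y + cls m src tgt T₀ e y z := by
      rw [← cls_eq hT₀ hp e, ← cls_eq hT₀ hq e, ← cls_eq hT₀ (hp.append hq) e]
      have : proj (p ++ q) = proj p ++ proj q := by simp [proj]
      rw [this, sc_append]
      simp
    split_ifs
    · rw [← mul_add]
      apply mul_le_mul_of_nonneg_left _ (by positivity)
      rw [h]
      exact_mod_cast (ZMod.natAbs_valMinAbs_add_le _ _).trans (Int.natAbs_add_le _ _)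
    · simp
end

section
/- Let m ≥ 3, let X be a finite connected 2-connected graph with oriented edges such that the number N of maximal spanning trees of X not containing a given edge is independent of the edge, and let X̃ be its ℤ_m-homology cover. Then for all x, y ∈ X̃, d_Q(x,y) = 0 if and only if x = y; hence d_Q is a metric on X̃. -/
open Filter
open scoped ENNReal NNReal

namespace MultiGraph

section Walks

variable {V E : Type*} {src tgt : E → V}

theorem isWalk_append {p q : List (E × Bool)} {a b c : V} (hp : IsWalk src tgt a b p)
    (hq : IsWalk src tgt b c q) : IsWalk src tgt a c (p ++ q) := by
  induction p generalizing a with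
  | nil => cases hp; exact hq
  | cons s p ih => exact ⟨hp.1, ih hp.2⟩

/-- Reachability through edges satisfying `P`. -/
def ReachIn (src tgt : E → V) (P : E → Prop) (a b : V) : Prop :=
  ∃ p, IsWalk src tgt a b p ∧ ∀ s ∈ p, P s.1

theorem ReachIn.refl (P : E → Prop) (a : V) : ReachIn src tgt P a a :=
  ⟨[], rfl, by simp⟩

theorem ReachIn.trans {P : E → Prop} {a b c : V} (h : ReachIn src tgt P a b)
    (h' : ReachIn src tgt P b c) : ReachIn src tgt P a c := by
  obtain ⟨p, hp, hP⟩ := h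
  obtain ⟨q, hq, hQ⟩ := h'
  refine ⟨p ++ q, isWalk_append hp hq, ?_⟩
  intro s hs
  rcases List.mem_append.1 hs with h | h
  · exact hP s h
  · exact hQ s h

theorem ReachIn.fwd {P : E → Prop} {e : E} (h : P e) : ReachIn src tgt P (src e) (tgt e) :=
  ⟨[(e, true)], ⟨rfl, rfl⟩, by simpa using h⟩

theorem ReachIn.bwd {P : E → Prop} {e : E} (h : P e) : ReachIn src tgt P (tgt e) (src e) :=
  ⟨[(e, false)], ⟨rfl, rfl⟩, by simpa using h⟩

theorem ReachIn.rec_walk {P : E → Prop} {R : V → V → Prop} (hr : ∀ a, R a a)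
    (ht : ∀ a b c, R a b → R b c → R a c) (hf : ∀ e, P e → R (src e) (tgt e))
    (hb : ∀ e, P e → R (tgt e) (src e)) {a b : V} (h : ReachIn src tgt P a b) : R a b := by
  obtain ⟨p, hp, hP⟩ := h
  induction p generalizing a with
  | nil => cases hp; exact hr _
  | cons s p ih =>
    obtain ⟨h1, h2⟩ := hp
    have h3 := ih h2 (fun s hs => hP s (List.mem_cons_of_mem _ hs))
    have h4 := hP s List.mem_cons_self
    refine ht _ _ _ ?_ h3
    subst h1
    rcases s with ⟨e, _ | _⟩
    · exact hb e h4
    · exact hf e h4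

theorem ReachIn.symm {P : E → Prop} {a b : V} (h : ReachIn src tgt P a b) :
    ReachIn src tgt P b a :=
  ReachIn.rec_walk (R := fun a b => ReachIn src tgt P b a) (fun a => .refl _ _)
    (fun _ _ _ h h' => h'.trans h) (fun _ h => .bwd h) (fun _ h => .fwd h) h

theorem exists_suffix {p : List (E × Bool)} {a b c : V} (hp : IsWalk src tgt c b p)
    (ha : a ∈ p.map (stepSrc src tgt) ++ [b]) : ∃ q, q <:+ p ∧ IsWalk src tgt a b q := by
  induction p generalizing c with
  | nil =>
    simp at ha
    exact ⟨[], List.suffix_refl _, ha⟩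
  | cons s p ih =>
    simp only [List.map_cons, List.cons_append, List.mem_cons] at ha
    rcases ha with rfl | ha
    · exact ⟨s :: p, List.suffix_refl _, rfl, hp.2⟩
    · obtain ⟨q, hq, hw⟩ := ih hp.2 ha
      exact ⟨q, hq.trans (List.suffix_cons _ _), hw⟩

theorem stepTgt_mem {p : List (E × Bool)} {b c : V} (hp : IsWalk src tgt c b p)
    {s : E × Bool} (hs : s ∈ p) : stepTgt src tgt s ∈ p.map (stepSrc src tgt) ++ [b] := by
  induction p generalizing c with
  | nil => simp at hs
  | cons t p ih =>
    obtain ⟨h1, h2⟩ := hp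
    rcases List.mem_cons.1 hs with rfl | hs
    · cases p with
      | nil => simp; right; exact h2
      | cons u p => simp [h2.1]
    · have := ih h2 hs
      simp only [List.map_cons, List.cons_append, List.mem_cons]
      exact Or.inr this

theorem exists_simple {P : E → Prop} {a b : V} (h : ReachIn src tgt P a b) :
    ∃ p, IsWalk src tgt a b p ∧ (∀ s ∈ p, P s.1) ∧ (p.map (stepSrc src tgt) ++ [b]).Nodup ∧
      (p.map Prod.fst).Nodup := by
  obtain ⟨p, hp, hP⟩ := h
  induction p generalizing a with
  | nil => exact ⟨[], hp, by simp, by simp, by simp⟩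
  | cons s p ih =>
    obtain ⟨h1, h2⟩ := hp
    obtain ⟨q, hq, hqP, hn, he⟩ := ih h2 (fun s hs => hP s (List.mem_cons_of_mem _ hs))
    by_cases hs : stepSrc src tgt s ∈ q.map (stepSrc src tgt) ++ [b]
    · obtain ⟨q', hq', hw⟩ := exists_suffix hq hs
      refine ⟨q', h1 ▸ hw, fun s hs => hqP s (hq'.subset hs), ?_, ?_⟩
      · exact hn.sublist ((hq'.sublist.map _).append (List.Sublist.refl _))
      · exact he.sublist (hq'.sublist.map _)
    · refine ⟨s :: q, ⟨h1, hq⟩, ?_, ?_, ?_⟩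
      · intro t ht
        rcases List.mem_cons.1 ht with rfl | ht
        · exact hP _ List.mem_cons_self
        · exact hqP t ht
      · simp only [List.map_cons, List.cons_append]
        exact List.nodup_cons.2 ⟨hs, hn⟩
      · simp only [List.map_cons]
        refine List.nodup_cons.2 ⟨?_, he⟩
        intro hmem
        obtain ⟨t, ht, hte⟩ := List.mem_map.1 hmem
        apply hs
        have m1 : stepSrc src tgt t ∈ q.map (stepSrc src tgt) ++ [b] :=
          List.mem_append_left _ (List.mem_map_of_mem ht)
        have m2 := stepTgt_mem hq ht
        rcases s with ⟨e, _ | _⟩ <;> rcases t with ⟨e', _ | _⟩ <;>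
          simp only at hte <;> subst hte <;> first | exact m1 | exact m2

theorem tree_not_reach {T : Set E} (hT : IsSpanningTree src tgt T) {e : E} (he : e ∈ T) :
    ¬ ReachIn src tgt (fun f => f ∈ T ∧ f ≠ e) (src e) (tgt e) := by
  intro h
  obtain ⟨p, hp, hP, hn, hE⟩ := exists_simple h.symm
  have hc : IsCycle src tgt (src e) ((e, true) :: p) := by
    refine ⟨⟨rfl, hp⟩, by simp, ?_, ?_⟩
    · simp only [List.map_cons]
      refine List.nodup_cons.2 ⟨?_, hE⟩
      intro hmem
      obtain ⟨t, ht, hte⟩ := List.mem_map.1 hmem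
      exact (hP t ht).2 hte
    · have := List.nodup_append_comm.1 hn
      simpa [stepSrc] using this
  obtain ⟨s, hs, hsT⟩ := hT.2 _ _ hc
  rcases List.mem_cons.1 hs with rfl | hs
  · exact hsT he
  · exact hsT (hP s hs).1

theorem exists_tree_avoiding [Finite E] (h2 : TwoConnected src tgt) (e : E) :
    ∃ T : Set E, IsSpanningTree src tgt T ∧ e ∉ T := by
  let F : Set (Set E) := {T | (∀ a b, ReachIn src tgt (fun f => f ∈ T) a b) ∧ e ∉ T}
  have hF : F.Nonempty := by
    refine ⟨{e}ᶜ, fun a b => ?_, by simp⟩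
    obtain ⟨p, hp, hP⟩ := h2 e a b
    exact ⟨p, hp, fun s hs => by simpa using hP s hs⟩
  obtain ⟨T, hT⟩ := (Set.toFinite F).exists_minimal hF
  refine ⟨T, ⟨hT.prop.1, ?_⟩, hT.prop.2⟩
  intro a p hc
  by_contra hcon
  push Not at hcon
  obtain ⟨hw, hne, hE, -⟩ := hc
  cases p with
  | nil => exact hne rfl
  | cons s p =>
    have hsT : s.1 ∈ T := hcon s List.mem_cons_self
    simp only [List.map_cons] at hE
    have hE := (List.nodup_cons.1 hE).1
    have hr : ReachIn src tgt (fun f => f ∈ T \ {s.1}) (stepTgt src tgt s) (stepSrc src tgt s) := by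
      refine ⟨p, hw.1 ▸ hw.2, fun t ht => ⟨hcon t (List.mem_cons_of_mem _ ht), ?_⟩⟩
      intro h
      exact hE (h ▸ List.mem_map_of_mem ht)
    have hr2 : ReachIn src tgt (fun f => f ∈ T \ {s.1}) (src s.1) (tgt s.1) := by
      rcases s with ⟨f, _ | _⟩
      · exact hr
      · exact hr.symm
    have hmem : T \ {s.1} ∈ F := by
      refine ⟨fun a b => ?_, fun h => hT.prop.2 h.1⟩
      have key : ∀ f, f ∈ T → ReachIn src tgt (fun f => f ∈ T \ {s.1}) (src f) (tgt f) := by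
        intro f hf
        by_cases hfs : f = s.1
        · rw [hfs]; exact hr2
        · exact .fwd ⟨hf, hfs⟩
      exact ReachIn.rec_walk (fun a => .refl _ _) (fun _ _ _ h h' => h.trans h') key
        (fun f hf => (key f hf).symm) (hT.prop.1 a b)
    have := hT.le_of_le hmem (fun x hx => hx.1)
    exact (this hsT).2 rfl

theorem geod_isWalk {a b : V} (h : ∃ p, IsWalk src tgt a b p) :
    IsWalk src tgt a b (geod src tgt a b) := by
  have h' : ∃ p, IsWalk src tgt a b p ∧ p.length = gdist src tgt a b := by
    obtain ⟨p, hp⟩ := h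
    exact Nat.sInf_mem (s := {n | ∃ p, IsWalk src tgt a b p ∧ p.length = n}) ⟨_, p, hp, rfl⟩
  unfold geod
  rw [dif_pos h']
  exact h'.choose_spec.1

end Walks

section CoverLemmas

variable {V E : Type} {src tgt : E → V} {m : ℕ} {T₀ : Set E}

theorem cover_reach [Finite E] [NeZero m] (hT : IsSpanningTree src tgt T₀)
    (x y : V × ({e : E // e ∉ T₀} → ZMod m)) :
    ReachIn (coverSrc m src T₀) (coverTgt m tgt T₀) (fun _ => True) x y := by
  classical
  have := Fintype.ofFinite E
  set R := ReachIn (coverSrc m src T₀) (coverTgt m tgt T₀) (fun _ => True) with hR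
  have hstep : ∀ e k, R (src e, k) (tgt e, k + coverRho m T₀ e) := fun e k =>
    ReachIn.fwd (src := coverSrc m src T₀) (tgt := coverTgt m tgt T₀) (e := (e, k)) trivial
  have h1 : ∀ k v w, R (v, k) (w, k) := by
    intro k v w
    have hs : ∀ e, e ∈ T₀ → R (src e, k) (tgt e, k) := by
      intro e he
      have h0 : coverRho m T₀ e = 0 := by
        funext f
        have : f.1 ≠ e := fun h => f.2 (h ▸ he)
        simp [coverRho, this]
      have := hstep e k
      rwa [h0, add_zero] at this
    exact ReachIn.rec_walk (P := fun f => f ∈ T₀) (R := fun v w => R (v, k) (w, k))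
      (fun a => .refl _ _) (fun _ _ _ h h' => h.trans h') hs (fun e he => (hs e he).symm)
      (hT.1 v w)
  let A : AddSubmonoid ({e : E // e ∉ T₀} → ZMod m) :=
    { carrier := {l | ∀ v k, R (v, k) (v, k + l)}
      zero_mem' := fun v k => by rw [add_zero]; exact .refl _ _
      add_mem' := fun {a b} ha hb v k => by
        rw [← add_assoc]; exact (ha v k).trans (hb v _) }
  have hA : ∀ f : {e : E // e ∉ T₀}, Pi.single f (1 : ZMod m) ∈ A := by
    intro f v k
    have h0 : coverRho m T₀ f.1 = Pi.single f 1 := by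
      funext g
      simp [coverRho, Pi.single_apply, Subtype.ext_iff]
    have := hstep f.1 k
    rw [h0] at this
    exact ((h1 k v _).trans this).trans (h1 _ _ v)
  have hA' : ∀ l, l ∈ A := by
    intro l
    rw [← Finset.univ_sum_single l]
    refine A.sum_mem fun f _ => ?_
    have : Pi.single f (l f) = (l f).val • (Pi.single f (1 : ZMod m) : {e : E // e ∉ T₀} → ZMod m) := by
      funext g
      by_cases h : g = f
      · subst h; simp
      · simp [h]
    rw [this]
    exact A.nsmul_mem (hA f) _
  have h2 := hA' (y.2 - x.2) x.1 x.2
  rw [add_sub_cancel] at h2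
  exact h2.trans (h1 _ _ _)

/-- Signed number of traversals of lifts of `e`, modulo `m`. -/
noncomputable def scount (m : ℕ) (T₀ : Set E) (e : E)
    (p : List ((E × ({e' : E // e' ∉ T₀} → ZMod m)) × Bool)) : ZMod m :=
  (((countLiftF m T₀ e p : ℤ) - (countLiftB m T₀ e p : ℤ) : ℤ) : ZMod m)

open Classical in
theorem scount_nil (e : E) : scount m T₀ e [] = 0 := by
  simp [scount, countLiftF, countLiftB]

open Classical in
theorem scount_cons (e : E) (s : (E × ({e' : E // e' ∉ T₀} → ZMod m)) × Bool)
    (p : List ((E × ({e' : E // e' ∉ T₀} → ZMod m)) × Bool)) :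
    scount m T₀ e (s :: p) =
      (if s.1.1 = e then (if s.2 then 1 else -1) else 0) + scount m T₀ e p := by
  rcases s with ⟨⟨f, k⟩, _ | _⟩ <;> by_cases h : f = e <;>
    simp [scount, countLiftF, countLiftB, List.filter_cons, h] <;> ring

open Classical in
theorem scount_eq_potential {e : E} {Φ : V × ({e' : E // e' ∉ T₀} → ZMod m) → ZMod m}
    (hΦ : ∀ s, Φ (coverTgt m tgt T₀ s) = Φ (coverSrc m src T₀ s) + if s.1 = e then 1 else 0)
    {x y : V × ({e' : E // e' ∉ T₀} → ZMod m)}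
    {p : List ((E × ({e' : E // e' ∉ T₀} → ZMod m)) × Bool)}
    (hp : IsWalk (coverSrc m src T₀) (coverTgt m tgt T₀) x y p) :
    scount m T₀ e p = Φ y - Φ x := by
  induction p generalizing x with
  | nil => cases hp; simp [scount_nil]
  | cons s p ih =>
    obtain ⟨h1, h2⟩ := hp
    rw [scount_cons, ih h2, ← h1]
    have := hΦ s.1
    rcases s with ⟨s, _ | _⟩ <;> simp only [stepSrc, stepTgt] at * <;> split_ifs at * <;>
      simp_all <;> ring

open Classical in
theorem boundary_formula [Fintype E] (g : V → ZMod m)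
    {x y : V × ({e' : E // e' ∉ T₀} → ZMod m)}
    {p : List ((E × ({e' : E // e' ∉ T₀} → ZMod m)) × Bool)}
    (hp : IsWalk (coverSrc m src T₀) (coverTgt m tgt T₀) x y p) :
    g y.1 - g x.1 = ∑ e, scount m T₀ e p * (g (tgt e) - g (src e)) := by
  induction p generalizing x with
  | nil => cases hp; simp [scount_nil]
  | cons s p ih =>
    obtain ⟨h1, h2⟩ := hp
    simp only [scount_cons, add_mul, Finset.sum_add_distrib]
    rw [← ih h2, ← h1]
    rcases s with ⟨⟨f, k⟩, _ | _⟩ <;> simp [stepSrc, stepTgt, coverSrc, coverTgt]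

open Classical in
theorem exists_potential [Fintype E] (hT : IsSpanningTree src tgt T₀) (e : E) :
    ∃ Φ : V × ({e' : E // e' ∉ T₀} → ZMod m) → ZMod m,
    ∀ s, Φ (coverTgt m tgt T₀ s) = Φ (coverSrc m src T₀ s) + if s.1 = e then 1 else 0 := by
  by_cases he : e ∈ T₀
  · let h : V → ZMod m := fun v =>
      if ReachIn src tgt (fun f => f ∈ T₀ ∧ f ≠ e) (src e) v then 0 else 1
    refine ⟨fun x => h x.1 - ∑ f, x.2 f * (h (tgt f.1) - h (src f.1)), ?_⟩
    rintro ⟨f, k⟩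
    simp only [coverSrc, coverTgt, Pi.add_apply, add_mul, Finset.sum_add_distrib]
    by_cases hf : f ∈ T₀
    · have h0 : coverRho m T₀ f = 0 := by
        funext g
        have : g.1 ≠ f := fun h => g.2 (h ▸ hf)
        simp [coverRho, this]
      rw [h0]
      by_cases hfe : f = e
      · subst hfe
        have h1 : h (src f) = 0 := if_pos (.refl _ _)
        have h2 : h (tgt f) = 1 := if_neg (tree_not_reach hT he)
        simp [h1, h2]; ring
      · have h3 : h (tgt f) = h (src f) := by
          have : ReachIn src tgt (fun f => f ∈ T₀ ∧ f ≠ e) (src e) (tgt f) ↔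
              ReachIn src tgt (fun f => f ∈ T₀ ∧ f ≠ e) (src e) (src f) :=
            ⟨fun h => h.trans (.bwd ⟨hf, hfe⟩), fun h => h.trans (.fwd ⟨hf, hfe⟩)⟩
          simp only [h, this]
        simp [h3, hfe]
    · have hfe : f ≠ e := fun h => hf (h ▸ he)
      have h4 : ∑ g : {e' : E // e' ∉ T₀}, coverRho m T₀ f g * (h (tgt g.1) - h (src g.1)) =
          h (tgt f) - h (src f) := by
        rw [Finset.sum_eq_single (⟨f, hf⟩ : {e' : E // e' ∉ T₀})]
        · simp [coverRho]
        · intro g _ hg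
          have : g.1 ≠ f := fun h => hg (Subtype.ext h)
          simp [coverRho, this]
        · simp
      rw [h4]
      simp [hfe]
      ring
  · refine ⟨fun x => x.2 ⟨e, he⟩, ?_⟩
    rintro ⟨f, k⟩
    simp [coverSrc, coverTgt, coverRho, eq_comm]

theorem min_mod_eq [NeZero m] (z : ℤ) :
    min ((z.natAbs % m : ℕ) : ℝ) ((m : ℝ) - ((z.natAbs % m : ℕ) : ℝ)) =
      ((z : ZMod m).valMinAbs.natAbs : ℝ) := by
  have h1 : ((z : ZMod m)).valMinAbs.natAbs = ((z.natAbs : ZMod m)).valMinAbs.natAbs := by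
    rcases Int.natAbs_eq z with h | h
    · conv_lhs => rw [h]
      simp
    · conv_lhs => rw [h]
      rw [Int.cast_neg, ZMod.natAbs_valMinAbs_neg, Int.cast_natCast]
  rw [h1, ZMod.valMinAbs_natAbs_eq_min, ZMod.val_natCast, Nat.cast_min, Nat.cast_sub]
  exact (Nat.mod_lt _ (NeZero.pos m)).le

theorem dQ_eq_sum [Fintype E] [NeZero m] (h2 : TwoConnected src tgt)
    (x y : V × ({e' : E // e' ∉ T₀} → ZMod m)) :
    dQ m src tgt T₀ x y = ∑ e, ((scount m T₀ e
      (geod (coverSrc m src T₀) (coverTgt m tgt T₀) x y)).valMinAbs.natAbs : ℝ) := by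
  classical
  unfold dQ
  rw [finsum_eq_sum_of_fintype]
  refine Finset.sum_congr rfl fun e _ => ?_
  unfold phi
  rw [min_mod_eq]
  change _ = (((((countLiftF m T₀ e _ : ℤ) - (countLiftB m T₀ e _ : ℤ) : ℤ) : ZMod m)).valMinAbs.natAbs : ℝ)
  generalize ((((((countLiftF m T₀ e _ : ℤ) - (countLiftB m T₀ e _ : ℤ) : ℤ) : ZMod m)).valMinAbs.natAbs : ℕ) : ℝ) = c
  rw [← finsum_subtype_eq_finsum_cond (f := fun _ : Set E => 1 / (numTreesAvoiding src tgt e : ℝ) * c)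
    (fun T => IsSpanningTree src tgt T ∧ e ∉ T), finsum_eq_sum_of_fintype, Finset.sum_const,
    Finset.card_univ, nsmul_eq_mul, ← Nat.card_eq_fintype_card]
  have hpos : (numTreesAvoiding src tgt e : ℝ) ≠ 0 := by
    obtain ⟨T, hT⟩ := exists_tree_avoiding h2 e
    have : Nonempty {T : Set E // IsSpanningTree src tgt T ∧ e ∉ T} := ⟨⟨T, hT⟩⟩
    exact_mod_cast (Nat.card_pos (α := {T : Set E // IsSpanningTree src tgt T ∧ e ∉ T})).ne'
  change (numTreesAvoiding src tgt e : ℝ) * _ = _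
  field_simp

end CoverLemmas

end MultiGraph

open MultiGraph in
/-- The pseudometric `d_Q` on the `ℤ/m`-homology cover separates points:
`d_Q(x,y) = 0` if and only if `x = y`; hence `d_Q` is a metric on `X̃`. -/
theorem dQ_eq_zero_iff_and_metric (m : ℕ) (hm : 3 ≤ m)
    (V E : Type) [Fintype V] [Fintype E]
    (src tgt : E → V) (hconn : Connected src tgt) (h2conn : TwoConnected src tgt)
    (N : ℕ) (hN : ∀ e : E, numTreesAvoiding src tgt e = N)
    (T₀ : Set E) (hT₀ : IsSpanningTree src tgt T₀) :
    (∀ x y : V × ({e : E // e ∉ T₀} → ZMod m),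
      dQ m src tgt T₀ x y = 0 ↔ x = y) ∧
    IsMetricOn (dQ m src tgt T₀) := by
  classical
  have : NeZero m := ⟨by omega⟩
  have : Fact (1 < m) := ⟨by omega⟩
  have hw : ∀ x y, IsWalk (coverSrc m src T₀) (coverTgt m tgt T₀) x y
      (geod (coverSrc m src T₀) (coverTgt m tgt T₀) x y) := fun x y => by
    obtain ⟨p, hp, -⟩ := cover_reach (m := m) hT₀ x y
    exact geod_isWalk ⟨p, hp⟩
  choose Φ hΦ using fun e : E => exists_potential (m := m) hT₀ e
  have hsc : ∀ e x y, scount m T₀ e (geod (coverSrc m src T₀) (coverTgt m tgt T₀) x y) =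
      Φ e y - Φ e x := fun e x y => scount_eq_potential (hΦ e) (hw x y)
  have hd : ∀ x y, dQ m src tgt T₀ x y = ∑ e, ((Φ e y - Φ e x).valMinAbs.natAbs : ℝ) := by
    intro x y
    rw [dQ_eq_sum h2conn]
    simp only [hsc]
  have hzero : ∀ x y : V × ({e : E // e ∉ T₀} → ZMod m), dQ m src tgt T₀ x y = 0 ↔ x = y := by
    intro x y
    constructor
    · intro h
      rw [hd, Finset.sum_eq_zero_iff_of_nonneg (fun _ _ => Nat.cast_nonneg _)] at h
      have h0 : ∀ e, scount m T₀ e (geod (coverSrc m src T₀) (coverTgt m tgt T₀) x y) = 0 := by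
        intro e
        rw [hsc]
        have := h e (Finset.mem_univ e)
        simpa using this
      have hv : x.1 = y.1 := by
        have := boundary_formula (fun v => if v = x.1 then (1 : ZMod m) else 0) (hw x y)
        simp only [h0, zero_mul, Finset.sum_const_zero] at this
        by_contra hne
        rw [if_neg (fun h => hne h.symm)] at this
        simp at this
      have hk : x.2 = y.2 := by
        funext f
        have := scount_eq_potential (e := f.1) (Φ := fun x => x.2 f) (by
          rintro ⟨g, k⟩
          simp [coverSrc, coverTgt, coverRho, eq_comm]) (hw x y)
        rw [h0] at this
        exact (sub_eq_zero.1 this.symm).symm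
      exact Prod.ext hv hk
    · rintro rfl
      rw [hd]
      simp
  refine ⟨hzero, hzero, ?_, ?_⟩
  · intro x y
    rw [hd, hd]
    refine Finset.sum_congr rfl fun e _ => ?_
    rw [← neg_sub, ZMod.natAbs_valMinAbs_neg]
  · intro x y z
    rw [hd, hd, hd, ← Finset.sum_add_distrib]
    refine Finset.sum_le_sum fun e _ => ?_
    have := ZMod.natAbs_valMinAbs_add_le (Φ e y - Φ e x) (Φ e z - Φ e y)
    rw [show Φ e y - Φ e x + (Φ e z - Φ e y) = Φ e z - Φ e x by ring] at this
    have := this.trans (Int.natAbs_add_le _ _)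
    exact_mod_cast this
end
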